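/- arXiv:2305.11535 — 2 statements merged into one kernel-verified Lean document; each statement's English description precedes it below -/
import Mathlib

section
/- Let S be a conditionally completely regular semigroup, let s ∈ S, and let s' be a weak inverse of s. Then every ℋ-class of the 𝒟-class of s' contains a weak inverse of s: for every x ∈ S with x 𝒟 s', there exists a weak inverse s'' of s with s'' ℋ x. -/
/-- Green's relation ℒ: `s ℒ t` iff `{s} ∪ Ss = {t} ∪ St`. -/
def LRel {S : Type*} [Semigroup S] (s t : S) : Prop :=
  ({s} ∪ {x | ∃ a : S, x = a * s} : Set S) = ({t} ∪ {x | ∃ a : S, x = a * t} : Set S)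

/-- Green's relation ℛ: `s ℛ t` iff `{s} ∪ sS = {t} ∪ tS`. -/
def RRel {S : Type*} [Semigroup S] (s t : S) : Prop :=
  ({s} ∪ {x | ∃ a : S, x = s * a} : Set S) = ({t} ∪ {x | ∃ a : S, x = t * a} : Set S)

/-- Green's relation ℋ = ℒ ∩ ℛ. -/
def HRel {S : Type*} [Semigroup S] (s t : S) : Prop := LRel s t ∧ RRel s t

/-- Green's relation 𝒟: `s 𝒟 t` iff `∃ u, s ℒ u` and `u ℛ t`. -/
def DRel {S : Type*} [Semigroup S] (s t : S) : Prop := ∃ u : S, LRel s u ∧ RRel u t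

/-- An element `s` is regular if `s = s * x * s` for some `x`. -/
def IsRegularElem {S : Type*} [Semigroup S] (s : S) : Prop := ∃ x : S, s = s * x * s

/-- `S` is conditionally completely regular if every regular element is
ℋ-related to an idempotent. -/
def CondCompletelyRegular (S : Type*) [Semigroup S] : Prop :=
  ∀ s : S, IsRegularElem s → ∃ e : S, e * e = e ∧ HRel s e

/-!
If `x * s * x` is `ℋ`-related to `x`, say `x = x * s * x * a = b * (x * s * x)`, then
`x * a = b * x`, and this element is a weak inverse of `s` in the `ℋ`-class of `x`.

Let `t` be a weak inverse of `s` and `x ℛ t`. Then `x = t * s * x` and `s * x` is regular, so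
`s * x` is `ℋ`-related to its square; multiplying by `t` on the left gives `x * s * x ℋ x`.
The dual argument treats `x ℒ t`. If `x ℒ u` and `u ℛ s'`, the weak inverse of `s` found in the
`ℋ`-class of `u` serves as `t` in the dual argument.
-/

section Green

variable {S : Type*} [Semigroup S] {a b e x y : S}

theorem LRel.eq_or_exists_eq_mul (h : LRel x y) : x = y ∨ ∃ a, x = a * y :=
  h.subset (Or.inl rfl)

theorem RRel.eq_or_exists_eq_mul (h : RRel x y) : x = y ∨ ∃ a, x = y * a :=
  h.subset (Or.inl rfl)

theorem LRel.of_eq_mul (hx : x = a * y) (hy : y = b * x) : LRel x y := by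
  have subset_of_eq_mul {u v c : S} (hu : u = c * v) :
      ({u} ∪ {z | ∃ d, z = d * u} : Set S) ⊆ {v} ∪ {z | ∃ d, z = d * v} := by
    rintro _ (rfl | ⟨d, rfl⟩)
    · exact Or.inr ⟨c, hu⟩
    · exact Or.inr ⟨d * c, by rw [mul_assoc, ← hu]⟩
  exact (subset_of_eq_mul hx).antisymm (subset_of_eq_mul hy)

theorem RRel.of_eq_mul (hx : x = y * a) (hy : y = x * b) : RRel x y := by
  have subset_of_eq_mul {u v c : S} (hu : u = v * c) :
      ({u} ∪ {z | ∃ d, z = u * d} : Set S) ⊆ {v} ∪ {z | ∃ d, z = v * d} := by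
    rintro _ (rfl | ⟨d, rfl⟩)
    · exact Or.inr ⟨c, hu⟩
    · exact Or.inr ⟨c * d, by rw [← mul_assoc, ← hu]⟩
  exact (subset_of_eq_mul hx).antisymm (subset_of_eq_mul hy)

theorem LRel.mul_right_eq_self (h : LRel x y) (hy : y * e = y) : x * e = x := by
  obtain rfl | ⟨a, rfl⟩ := h.eq_or_exists_eq_mul
  · exact hy
  · rw [mul_assoc, hy]

theorem RRel.mul_left_eq_self (h : RRel x y) (hy : e * y = y) : e * x = x := by
  obtain rfl | ⟨a, rfl⟩ := h.eq_or_exists_eq_mul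
  · exact hy
  · rw [← mul_assoc, hy]

theorem LRel.exists_eq_mul (h : LRel x y) (hx : IsRegularElem x) : ∃ a, x = a * y := by
  obtain rfl | hxy := h.eq_or_exists_eq_mul
  · obtain ⟨z, hz⟩ := hx
    exact ⟨x * z, hz⟩
  · exact hxy

theorem RRel.exists_eq_mul (h : RRel x y) (hx : IsRegularElem x) : ∃ a, x = y * a := by
  obtain rfl | hxy := h.eq_or_exists_eq_mul
  · obtain ⟨z, hz⟩ := hx
    exact ⟨z * x, by rwa [← mul_assoc]⟩
  · exact hxy

end Green

section Regular

variable {S : Type*} [Semigroup S] {e s t x y : S}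

theorem IsRegularElem.of_isIdempotentElem (he : IsIdempotentElem e) : IsRegularElem e :=
  ⟨e, by rw [he.eq, he.eq]⟩

theorem IsRegularElem.of_lRel (hy : IsRegularElem y) (h : LRel x y) : IsRegularElem x := by
  obtain ⟨a, hya⟩ := LRel.exists_eq_mul h.symm hy
  obtain ⟨z, hz⟩ := hy
  have hx : x * (z * y) = x := h.mul_right_eq_self (by rw [← mul_assoc, ← hz])
  exact ⟨z * a, by rw [mul_assoc, mul_assoc, ← hya, hx]⟩

theorem IsRegularElem.of_rRel (hy : IsRegularElem y) (h : RRel x y) : IsRegularElem x := by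
  obtain ⟨a, hya⟩ := RRel.exists_eq_mul h.symm hy
  obtain ⟨z, hz⟩ := hy
  have hx : y * z * x = x := h.mul_left_eq_self hz.symm
  exact ⟨a * z, by rw [← mul_assoc, ← hya, hx]⟩

theorem IsRegularElem.mul_left (hx : IsRegularElem x) (h : t * (s * x) = x) :
    IsRegularElem (s * x) := by
  obtain ⟨z, hz⟩ := hx
  refine ⟨z * t, ?_⟩
  calc s * x = s * (x * z * x) := by rw [← hz]
    _ = s * (x * z * (t * (s * x))) := by rw [h]
    _ = s * x * (z * t) * (s * x) := by simp only [mul_assoc]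

theorem IsRegularElem.mul_right (hx : IsRegularElem x) (h : x * s * t = x) :
    IsRegularElem (x * s) := by
  obtain ⟨z, hz⟩ := hx
  refine ⟨t * z, ?_⟩
  calc x * s = x * z * x * s := by rw [← hz]
    _ = x * s * t * z * x * s := by rw [h]
    _ = x * s * (t * z) * (x * s) := by simp only [mul_assoc]

theorem CondCompletelyRegular.exists_eq_mul_self_mul (hS : CondCompletelyRegular S)
    (hx : IsRegularElem x) : ∃ a, x = x * x * a := by
  obtain ⟨e, he, hL, hR⟩ := hS x hx
  obtain ⟨a, ha⟩ := RRel.exists_eq_mul hR.symm (.of_isIdempotentElem he)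
  exact ⟨a, by rw [mul_assoc, ← ha, hL.mul_right_eq_self he]⟩

theorem CondCompletelyRegular.exists_eq_mul_mul_self (hS : CondCompletelyRegular S)
    (hx : IsRegularElem x) : ∃ a, x = a * (x * x) := by
  obtain ⟨e, he, hL, hR⟩ := hS x hx
  obtain ⟨a, ha⟩ := LRel.exists_eq_mul hL.symm (.of_isIdempotentElem he)
  exact ⟨a, by rw [← mul_assoc, ← ha, hR.mul_left_eq_self he]⟩

end Regular

section WeakInverse

variable {S : Type*} [Semigroup S] {a b s t x : S}

/-- `t` is a weak inverse of `s`, the notion that is transported along the `ℛ`- and `ℒ`-classes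
of `t`. The equation is oriented as in `stmt12`. -/
def IsWeakInverse (t s : S) : Prop := t = t * s * t

theorem IsWeakInverse.isRegularElem (ht : IsWeakInverse t s) : IsRegularElem t := ⟨s, ht⟩

theorem exists_isWeakInverse_hRel_of_eq_mul (ha : x = x * s * x * a) (hb : x = b * (x * s * x)) :
    ∃ q, IsWeakInverse q s ∧ HRel q x := by
  have hab : x * a = b * x := by
    calc x * a = b * (x * s * x) * a := by rw [← hb]
      _ = b * (x * s * x * a) := mul_assoc _ _ _
      _ = b * x := by rw [← ha]
  have hx_left : x = x * s * (x * a) := by rwa [← mul_assoc]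
  have hx_right : x = x * a * (s * x) := by
    rw [hab, mul_assoc, ← mul_assoc x]
    exact hb
  refine ⟨x * a, ?_, LRel.of_eq_mul hab hx_left, RRel.of_eq_mul rfl hx_right⟩
  calc x * a = x * a * (s * x) * a := by rw [← hx_right]
    _ = x * a * s * (x * a) := by simp only [mul_assoc]

theorem IsWeakInverse.exists_hRel_of_rRel (hS : CondCompletelyRegular S)
    (ht : IsWeakInverse t s) (h : RRel x t) : ∃ q, IsWeakInverse q s ∧ HRel q x := by
  have hx : t * (s * x) = x := by
    rw [← mul_assoc]
    exact h.mul_left_eq_self ht.symm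
  have hsx : IsRegularElem (s * x) := (ht.isRegularElem.of_rRel h).mul_left hx
  obtain ⟨a, ha⟩ := hS.exists_eq_mul_self_mul hsx
  obtain ⟨b, hb⟩ := hS.exists_eq_mul_mul_self hsx
  refine exists_isWeakInverse_hRel_of_eq_mul (a := a) (b := t * b * s) ?_ ?_
  · calc x = t * (s * x * (s * x) * a) := by rw [← ha, hx]
      _ = t * (s * x) * s * x * a := by simp only [mul_assoc]
      _ = x * s * x * a := by rw [hx]
  · calc x = t * (b * (s * x * (s * x))) := by rw [← hb, hx]
      _ = t * b * s * (x * s * x) := by simp only [mul_assoc]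

theorem IsWeakInverse.exists_hRel_of_lRel (hS : CondCompletelyRegular S)
    (ht : IsWeakInverse t s) (h : LRel x t) : ∃ q, IsWeakInverse q s ∧ HRel q x := by
  have hx : x * s * t = x := by
    rw [mul_assoc]
    exact h.mul_right_eq_self (by rw [← mul_assoc]; exact ht.symm)
  have hxs : IsRegularElem (x * s) := (ht.isRegularElem.of_lRel h).mul_right hx
  obtain ⟨a, ha⟩ := hS.exists_eq_mul_self_mul hxs
  obtain ⟨b, hb⟩ := hS.exists_eq_mul_mul_self hxs
  refine exists_isWeakInverse_hRel_of_eq_mul (a := s * a * t) (b := b) ?_ ?_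
  · calc x = x * s * (x * s) * a * t := by rw [← ha, hx]
      _ = x * s * x * (s * a * t) := by simp only [mul_assoc]
  · calc x = b * (x * s * (x * s)) * t := by rw [← hb, hx]
      _ = b * (x * s * (x * s * t)) := by simp only [mul_assoc]
      _ = b * (x * s * x) := by rw [hx]

end WeakInverse

/-- In a conditionally completely regular semigroup, if `s'` is a weak inverse of
`s`, then every ℋ-class of the 𝒟-class of `s'` contains a weak inverse of `s`. -/
theorem stmt12 {S : Type*} [Semigroup S] (hS : CondCompletelyRegular S)
    (s s' : S) (hw : s' = s' * s * s') :
    ∀ x : S, DRel x s' → ∃ s'' : S, s'' = s'' * s * s'' ∧ HRel s'' x := by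
  rintro x ⟨u, hxu, hus'⟩
  obtain ⟨q, hq, hqu⟩ := IsWeakInverse.exists_hRel_of_rRel hS hw hus'
  exact hq.exists_hRel_of_lRel hS (hxu.trans hqu.1.symm)
end

section
/- Let S be a conditionally completely regular semigroup and define the relation ρ on S by: s ρ t iff for every x ∈ S, (some weak inverse of s is 𝒟-related to x) ↔ (some weak inverse of t is 𝒟-related to x). Then ρ is a congruence on S (if a ρ b and c ρ d then (a*c) ρ (b*d)), and moreover s ρ (s*s) and (s*t) ρ (t*s) for all s, t ∈ S; hence S/ρ is a semilattice. -/
/-- The relation ρ: `s ρ t` iff for every `x`, some weak inverse of `s` is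
𝒟-related to `x` exactly when some weak inverse of `t` is. -/
def rhoRel {S : Type*} [Semigroup S] (s t : S) : Prop :=
  ∀ x : S, (∃ z : S, z = z * s * z ∧ DRel z x) ↔ (∃ z : S, z = z * t * z ∧ DRel z x)

/-!
Write `E(s)` for the set of idempotents in `SsS`. The elements `𝒟`-related to a weak inverse of `s`
are exactly those `𝒟`-related to an idempotent in `E(s)`, and `E(s)` is closed under `𝒟` among
idempotents, so `s ρ t` iff `E(s) = E(t)`. It remains to see that `E(ac) = E(a) ∩ E(c)`. If
`e = paq = rct` is idempotent, then `x = epa` and `y = cte` satisfy `x ℛ e ℒ y`, so `yx` is regular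
and hence `ℋ`-related to an idempotent. As in the Clifford–Miller theorem, this forces `xy ℛ e`,
and `e ∈ xyS ⊆ SacS` follows.
-/

section Green

variable {S : Type*} [Semigroup S] {a b e f s t u : S}

lemma lRel_iff : LRel s t ↔ s = t ∨ (∃ a, a * t = s) ∧ ∃ b, b * s = t := by
  constructor
  · intro h
    have hs : s = t ∨ ∃ a, s = a * t := h.subset (.inl rfl)
    have ht : t = s ∨ ∃ b, t = b * s := h.superset (.inl rfl)
    grind
  · rintro (rfl | ⟨⟨a, ha⟩, b, hb⟩)
    · rfl
    · ext x
      constructor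
      · rintro (rfl | ⟨c, rfl⟩)
        · exact .inr ⟨a, ha.symm⟩
        · exact .inr ⟨c * a, by rw [mul_assoc, ha]⟩
      · rintro (rfl | ⟨c, rfl⟩)
        · exact .inr ⟨b, hb.symm⟩
        · exact .inr ⟨c * b, by rw [mul_assoc, hb]⟩

lemma rRel_iff : RRel s t ↔ s = t ∨ (∃ a, t * a = s) ∧ ∃ b, s * b = t := by
  constructor
  · intro h
    have hs : s = t ∨ ∃ a, s = t * a := h.subset (.inl rfl)
    have ht : t = s ∨ ∃ b, t = s * b := h.superset (.inl rfl)
    grind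
  · rintro (rfl | ⟨⟨a, ha⟩, b, hb⟩)
    · rfl
    · ext x
      constructor
      · rintro (rfl | ⟨c, rfl⟩)
        · exact .inr ⟨a, ha.symm⟩
        · exact .inr ⟨a * c, by rw [← mul_assoc, ha]⟩
      · rintro (rfl | ⟨c, rfl⟩)
        · exact .inr ⟨b, hb.symm⟩
        · exact .inr ⟨b * c, by rw [← mul_assoc, hb]⟩

lemma LRel.of_mul_eq (ha : a * t = s) (hb : b * s = t) : LRel s t :=
  lRel_iff.2 (.inr ⟨⟨a, ha⟩, b, hb⟩)

lemma RRel.of_mul_eq (ha : t * a = s) (hb : s * b = t) : RRel s t :=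
  rRel_iff.2 (.inr ⟨⟨a, ha⟩, b, hb⟩)

lemma LRel.mul_right (h : LRel s t) (c : S) : LRel (s * c) (t * c) := by
  obtain rfl | ⟨⟨a, ha⟩, b, hb⟩ := lRel_iff.1 h
  · rfl
  · exact .of_mul_eq (a := a) (b := b) (by rw [← mul_assoc, ha]) (by rw [← mul_assoc, hb])

lemma LRel.mul_eq_left (h : LRel s t) (ht : t * a = t) : s * a = s := by
  obtain rfl | ⟨⟨b, rfl⟩, -⟩ := lRel_iff.1 h
  · exact ht
  · rw [mul_assoc, ht]

lemma RRel.exists_lRel_rRel (hst : RRel s t) (htu : LRel t u) : ∃ v, LRel s v ∧ RRel v u := by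
  obtain rfl | ⟨⟨a, rfl⟩, b, hb⟩ := rRel_iff.1 hst
  · exact ⟨u, htu, rfl⟩
  · have hu : u * (a * b) = u := LRel.mul_eq_left htu.symm (by rw [← mul_assoc, hb])
    exact ⟨u * a, htu.mul_right a, .of_mul_eq (b := b) rfl (by rw [mul_assoc, hu])⟩

lemma DRel.trans (hst : DRel s t) (htu : DRel t u) : DRel s u := by
  obtain ⟨v, hsv, hvt⟩ := hst
  obtain ⟨w, htw, hwu⟩ := htu
  obtain ⟨z, hvz, hzw⟩ := hvt.exists_lRel_rRel htw
  exact ⟨z, hsv.trans hvz, hzw.trans hwu⟩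

lemma lRel_iff_of_isIdempotentElem (he : IsIdempotentElem e) :
    LRel s e ↔ s * e = s ∧ ∃ a, a * s = e := by
  refine ⟨fun h ↦ ⟨h.mul_eq_left he, ?_⟩, fun ⟨hs, a, ha⟩ ↦ .of_mul_eq hs ha⟩
  obtain rfl | ⟨-, h⟩ := lRel_iff.1 h
  exacts [⟨s, he⟩, h]

lemma rRel_iff_of_isIdempotentElem (he : IsIdempotentElem e) :
    RRel s e ↔ e * s = s ∧ ∃ a, s * a = e := by
  refine ⟨fun h ↦ ?_, fun ⟨hs, a, ha⟩ ↦ .of_mul_eq hs ha⟩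
  obtain rfl | ⟨⟨a, rfl⟩, h⟩ := rRel_iff.1 h
  exacts [⟨he, s, he⟩, ⟨by rw [← mul_assoc, he], h⟩]

lemma DRel.exists_mul_mul_eq (hf : IsIdempotentElem f) (he : IsIdempotentElem e)
    (h : DRel f e) : ∃ a b, a * f * b = e := by
  obtain ⟨u, hfu, hue⟩ := h
  obtain ⟨huf, -⟩ := (lRel_iff_of_isIdempotentElem hf).1 hfu.symm
  obtain ⟨-, b, hb⟩ := (rRel_iff_of_isIdempotentElem he).1 hue
  exact ⟨u, b, by rw [huf, hb]⟩

lemma CondCompletelyRegular.rRel_mul (hS : CondCompletelyRegular S) (he : IsIdempotentElem e)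
    {x y : S} (hx : RRel x e) (hy : LRel y e) : RRel (x * y) e := by
  obtain ⟨hex, q, hxq⟩ := (rRel_iff_of_isIdempotentElem he).1 hx
  obtain ⟨hye, r, hry⟩ := (lRel_iff_of_isIdempotentElem he).1 hy
  have hyx : IsRegularElem (y * x) := by
    refine ⟨q * r, ?_⟩
    calc y * x = y * e * (e * x) := by rw [hye, hex]
      _ = y * (x * q) * (r * y * x) := by rw [hxq, hry]
      _ = y * x * (q * r) * (y * x) := by simp only [mul_assoc]
  obtain ⟨i, hi, hLi, hRi⟩ := hS (y * x) hyx
  obtain ⟨-, k, hk⟩ := (rRel_iff_of_isIdempotentElem hi).1 hRi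
  have hLx : LRel x (y * x) := .of_mul_eq (a := r) (b := y) (by rw [← mul_assoc, hry, hex]) rfl
  have hxi : x * i = x := LRel.mul_eq_left (hLx.trans hLi) hi
  refine .of_mul_eq (a := x * y) (b := x * k * q) (by rw [← mul_assoc, hex]) ?_
  calc x * y * (x * k * q) = x * (y * x * k) * q := by simp only [mul_assoc]
    _ = e := by rw [hk, hxi, hxq]

end Green

section IdempotentsBelow

variable {S : Type*} [Semigroup S] {e f s t : S}

/-- The idempotents `𝒥`-below `s`, which turn out to determine the `ρ`-class of `s`. Since
`e = e * e * e`, membership in `SsS` amounts to membership in the principal ideal `S¹sS¹`. -/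
def idempotentsBelow (s : S) : Set S := {e | IsIdempotentElem e ∧ ∃ p q, p * s * q = e}

lemma mem_idempotentsBelow_of_dRel (hf : f ∈ idempotentsBelow s) (he : IsIdempotentElem e)
    (h : DRel f e) : e ∈ idempotentsBelow s := by
  obtain ⟨hff, p, q, rfl⟩ := hf
  obtain ⟨a, b, rfl⟩ := h.exists_mul_mul_eq hff he
  exact ⟨he, a * p, q * b, by simp only [mul_assoc]⟩

lemma exists_weakInverse_dRel_of_mem_idempotentsBelow (he : e ∈ idempotentsBelow s) :
    ∃ z, z = z * s * z ∧ DRel z e := by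
  obtain ⟨hee, p, q, hpq⟩ := he
  have hepsq : e * p * (s * q) = e := by rw [mul_assoc, ← mul_assoc p, hpq, hee]
  have hpsqe : p * s * (q * e * p) = e * p := by rw [← mul_assoc, ← mul_assoc, hpq, hee]
  refine ⟨q * e * p, ?_, e * p, ?_, ?_⟩
  · calc q * e * p = q * (e * e) * p := by rw [hee]
      _ = q * (e * p * (s * q) * e) * p := by rw [hepsq]
      _ = q * e * p * s * (q * e * p) := by simp only [mul_assoc]
  · exact .of_mul_eq (a := q) (b := p * s) (mul_assoc ..).symm hpsqe
  · exact .of_mul_eq (a := p) (b := s * q) rfl hepsq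

lemma exists_weakInverse_dRel_iff {x : S} :
    (∃ z, z = z * s * z ∧ DRel z x) ↔ ∃ e ∈ idempotentsBelow s, DRel e x := by
  constructor
  · rintro ⟨z, hz, u, hzu, hux⟩
    have he : IsIdempotentElem (s * z) := by
      rw [IsIdempotentElem, mul_assoc, ← mul_assoc z, ← hz]
    have hL : LRel (s * z) z := .of_mul_eq (a := s) (b := z) rfl (by rw [← mul_assoc, ← hz])
    exact ⟨s * z, ⟨he, s * z, z, by rw [mul_assoc, he]⟩, u, hL.trans hzu, hux⟩
  · rintro ⟨e, he, hex⟩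
    obtain ⟨z, hz, hze⟩ := exists_weakInverse_dRel_of_mem_idempotentsBelow he
    exact ⟨z, hz, hze.trans hex⟩

lemma mem_idempotentsBelow_iff_exists_dRel (he : IsIdempotentElem e) :
    e ∈ idempotentsBelow s ↔ ∃ f ∈ idempotentsBelow s, DRel f e :=
  ⟨fun h ↦ ⟨e, h, e, rfl, rfl⟩, fun ⟨_, hf, hfe⟩ ↦ mem_idempotentsBelow_of_dRel hf he hfe⟩

lemma rhoRel_iff_idempotentsBelow_eq :
    rhoRel s t ↔ idempotentsBelow s = idempotentsBelow t := by
  simp only [rhoRel, exists_weakInverse_dRel_iff]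
  constructor
  · intro h
    ext e
    by_cases he : IsIdempotentElem e
    · simpa only [mem_idempotentsBelow_iff_exists_dRel he] using h e
    · exact iff_of_false (fun hs ↦ he hs.1) (fun ht ↦ he ht.1)
  · intro h x
    rw [h]

lemma idempotentsBelow_mul_subset_inter :
    idempotentsBelow (s * t) ⊆ idempotentsBelow s ∩ idempotentsBelow t := by
  rintro e ⟨he, p, q, hpq⟩
  exact ⟨⟨he, p, t * q, by simpa only [mul_assoc] using hpq⟩,
    ⟨he, p * s, q, by simpa only [mul_assoc] using hpq⟩⟩

lemma CondCompletelyRegular.idempotentsBelow_mul (hS : CondCompletelyRegular S) (s t : S) :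
    idempotentsBelow (s * t) = idempotentsBelow s ∩ idempotentsBelow t := by
  refine idempotentsBelow_mul_subset_inter.antisymm ?_
  rintro e ⟨⟨he, p, q, hpq⟩, -, p', q', hpq'⟩
  have hx : RRel (e * (p * s)) e :=
    .of_mul_eq (a := p * s) (b := q) rfl (by rw [mul_assoc, hpq, he])
  have hy : LRel (t * q' * e) e :=
    .of_mul_eq (a := t * q') (b := p') rfl (by rw [← mul_assoc, ← mul_assoc, hpq', he])
  obtain ⟨-, k, hk⟩ := (rRel_iff_of_isIdempotentElem he).1 (hS.rRel_mul he hx hy)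
  exact ⟨he, e * p, q' * e * k, by simpa only [mul_assoc] using hk⟩

end IdempotentsBelow

/-- In a conditionally completely regular semigroup, ρ is a congruence and
`s ρ s²`, `st ρ ts`: `S/ρ` is a semilattice. -/
theorem stmt14 {S : Type*} [Semigroup S] (hS : CondCompletelyRegular S) :
    (∀ a b c d : S, rhoRel a b → rhoRel c d → rhoRel (a * c) (b * d)) ∧
      (∀ s : S, rhoRel s (s * s)) ∧ (∀ s t : S, rhoRel (s * t) (t * s)) := by
  simp only [rhoRel_iff_idempotentsBelow_eq, hS.idempotentsBelow_mul]
  refine ⟨fun a b c d hab hcd ↦ ?_, fun s ↦ ?_, fun s t ↦ ?_⟩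
  · rw [hab, hcd]
  · exact (Set.inter_self _).symm
  · exact Set.inter_comm _ _
end
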